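/- For every cardinal number α ≥ 𝔠 and every index set Q with |Q| = α, there exists a family {(A_q, B_q) : q ∈ Q} of pairs of metrizable topological spaces, each of cardinality α, such that for every q ∈ Q: A_q is homeomorphic to a clopen subset of B_q, B_q is homeomorphic to a closed subset of A_q but to no clopen subset of A_q; and moreover, whenever q ≠ q', there exists no injective continuous map from any of the spaces A_q, B_q into any of the spaces A_{q'}, B_{q'}. -/

import Mathlib

universe u

open Cardinal

/-- `A` is homeomorphic to a clopen subset of `B`. -/
def HomeoToClopenSubset (A : Type*) [TopologicalSpace A]
    (B : Type*) [TopologicalSpace B] : Prop :=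
  ∃ t : Set B, IsClopen t ∧ Nonempty (A ≃ₜ t)

/-- `A` is homeomorphic to a closed subset of `B`. -/
def HomeoToClosedSubset (A : Type*) [TopologicalSpace A]
    (B : Type*) [TopologicalSpace B] : Prop :=
  ∃ t : Set B, IsClosed t ∧ Nonempty (A ≃ₜ t)

/-- There exists no injective continuous map from `A` into `B`. -/
def NoInjCont (A : Type*) [TopologicalSpace A]
    (B : Type*) [TopologicalSpace B] : Prop :=
  ¬ ∃ f : A → B, Continuous f ∧ Function.Injective f

/-- The conditions on a single pair `(A, B)`: both metrizable of cardinality `α`,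
`A` is homeomorphic to a clopen subset of `B`, and `B` is homeomorphic to a closed
subset of `A` but to no clopen subset of `A`. -/
def Stmt8Pair (α : Cardinal.{u}) (A B : Type u)
    [TopologicalSpace A] [TopologicalSpace B] : Prop :=
  TopologicalSpace.MetrizableSpace A ∧ TopologicalSpace.MetrizableSpace B ∧
  #A = α ∧ #B = α ∧
  HomeoToClopenSubset A B ∧ HomeoToClosedSubset B A ∧ ¬ HomeoToClopenSubset B A

/-!
By a Bernstein-type transfinite construction there are countably many dense connected sets
`E c ⊆ ℂ` so rigid that the only injective continuous maps between relatively open pieces of them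
are identity maps. Gluing copies of the `E c` along the edges of a digraph with coloured edges,
where an edge of colour `c` is a copy of `E c` with `0` as its source and `1` as its target,
yields a metric space; rigidity forces every injective continuous map between two such spaces to
come from a morphism of coloured digraphs.

Countably many colours suffice to make the order of a well-ordered set `V` with a top element rigid.
Choose a cofinal sequence in each element of countable cofinality and colour the edge from its
`n`-th term by `n`. A strictly increasing map that moves `m` has to fix the supremum of the orbit of
`m`, and hence the sequence chosen in it, which traps the orbit below that supremum. So the
identity is the only morphism, and giving one loop at a varying vertex its own colour produces
`#V` many spaces `W` without injective continuous maps between different ones. The required pairs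
are `ℕ × W` and the sum of `ℕ × W` with an isolated point: the isolated point can be put into a copy
of `W`, but not so as to have an open image.
-/

section Diagonalization

open Set

variable {P : Type u} {κ : Cardinal.{u}}

theorem exists_mem_notMem_image_notMem (hκ : ℵ₀ ≤ κ) {S A B : Set P} {h : P → P}
    (hS : κ ≤ #S) (hinj : InjOn h S) (hA : #A < κ) (hB : #B < κ) :
    ∃ p ∈ S, p ∉ A ∧ h p ∉ B := by
  by_contra! hcon
  have hcover : S ⊆ A ∪ S ∩ h ⁻¹' B := fun p hp =>
    or_iff_not_imp_left.2 fun hpA => ⟨hp, hcon p hp hpA⟩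
  have hpreimage : #(S ∩ h ⁻¹' B : Set P) < κ := by
    refine lt_of_le_of_lt (mk_le_of_injective (f := fun p => (⟨h p, p.2.2⟩ : B)) ?_) hB
    exact fun p q hpq => Subtype.ext (hinj p.2.1 q.2.1 (congrArg Subtype.val hpq))
  exact (hS.trans ((mk_le_mk_of_subset hcover).trans (mk_union_le _ _))).not_gt
    (add_lt_of_lt hκ hA hpreimage)

theorem exists_superset_forall_image_notMem (hκ : ℵ₀ ≤ κ) {Ξ : Type u} (hΞ : #Ξ ≤ κ)
    {T : Set P} (hT : #T < κ) {S : Ξ → Set P} {h : Ξ → P → P} (hS : ∀ ξ, κ ≤ #(S ξ))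
    (hinj : ∀ ξ, InjOn (h ξ) (S ξ)) (hne : ∀ ξ, ∀ p ∈ S ξ, h ξ p ≠ p) :
    ∃ E, T ⊆ E ∧ ∀ ξ, ∃ p ∈ S ξ, p ∈ E ∧ h ξ p ∉ E := by
  obtain ⟨_, _, hord⟩ := exists_ord_eq_type_lt Ξ
  have hIio (ξ : Ξ) : #(Iio ξ) < κ := (mk_Iio_lt ξ hord).trans_le hΞ
  have hstep (ξ : Ξ) (prev : (η : Ξ) → η < ξ → P) : ∃ p ∈ S ξ,
      p ∉ range (fun η : Iio ξ => h η (prev η η.2)) ∧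
      h ξ p ∉ range (fun η : Iio ξ => prev η η.2) ∪ T :=
    exists_mem_notMem_image_notMem hκ (hS ξ) (hinj ξ) (mk_range_le.trans_lt (hIio ξ))
      ((mk_union_le _ _).trans_lt (add_lt_of_lt hκ (mk_range_le.trans_lt (hIio ξ)) hT))
  choose next hnext using hstep
  let p : Ξ → P := wellFounded_lt.fix next
  have hp (ξ : Ξ) : p ξ ∈ S ξ ∧ p ξ ∉ range (fun η : Iio ξ => h η (p η)) ∧
      h ξ (p ξ) ∉ range (fun η : Iio ξ => p η) ∪ T := by
    rw [show p ξ = next ξ fun η _ => p η from wellFounded_lt.fix_eq next ξ]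
    exact hnext ξ fun η _ => p η
  refine ⟨T ∪ range p, subset_union_left, fun ξ => ⟨p ξ, (hp ξ).1, .inr ⟨ξ, rfl⟩, ?_⟩⟩
  rintro (hmem | ⟨η, hη⟩)
  · exact (hp ξ).2.2 (.inr hmem)
  · rcases lt_trichotomy η ξ with hlt | rfl | hlt
    · exact (hp ξ).2.2 (.inl ⟨⟨η, hlt⟩, hη⟩)
    · exact hne η _ (hp η).1 hη.symm
    · exact (hp η).2.1 ⟨⟨ξ, hlt⟩, hη.symm⟩

theorem exists_superset_forall_not_mapsTo (hκ : ℵ₀ ≤ κ) {T : Set P} (hT : #T < κ)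
    {𝓕 : Set (P → P)} (h𝓕 : #𝓕 ≤ κ) {𝓓 : Set (Set P)} (h𝓓 : #𝓓 ≤ κ) :
    ∃ E, T ⊆ E ∧ ∀ h ∈ 𝓕, ∀ D ∈ 𝓓, ∀ S ⊆ D, κ ≤ #S → InjOn h S → (∀ p ∈ S, h p ≠ p) →
      ¬ MapsTo h (D ∩ E) E := by
  let IsTask (t : 𝓕 × 𝓓) (S : Set P) : Prop :=
    S ⊆ t.2 ∧ κ ≤ #S ∧ InjOn (t.1 : P → P) S ∧ ∀ p ∈ S, (t.1 : P → P) p ≠ p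
  have hcard : #{t : 𝓕 × 𝓓 // ∃ S, IsTask t S} ≤ κ := by
    refine (mk_subtype_le _).trans ?_
    rw [mk_prod, lift_id, lift_id]
    exact (mul_le_mul' h𝓕 h𝓓).trans (mul_eq_self hκ).le
  choose S hSD hSκ hSinj hSne using fun t : {t : 𝓕 × 𝓓 // ∃ S, IsTask t S} => t.2
  obtain ⟨E, hTE, hE⟩ := exists_superset_forall_image_notMem hκ hcard hT hSκ hSinj hSne
  refine ⟨E, hTE, fun h hh D hD S hS hκS hinj hne hmaps => ?_⟩
  obtain ⟨p, hpS, hpE, hp⟩ := hE ⟨(⟨h, hh⟩, ⟨D, hD⟩), S, hS, hκS, hinj, hne⟩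
  exact hp (hmaps ⟨hSD _ hpS, hpE⟩)

theorem exists_family_forall_not_mapsTo (hκ : ℵ₀ ≤ κ) {ι X : Type u} (hι : #ι < κ)
    {T : Set X} (hT : #T < κ) {𝓕 : Set (X → X)} (h𝓕 : #𝓕 ≤ κ)
    {𝓓 : Set (Set X)} (h𝓓 : #𝓓 ≤ κ) :
    ∃ E : ι → Set X, (∀ i, T ⊆ E i) ∧ ∀ i j, ∀ h ∈ 𝓕, ∀ D ∈ 𝓓, ∀ S ⊆ D, κ ≤ #S → InjOn h S →
      (i = j → ∀ x ∈ S, h x ≠ x) → ¬ MapsTo h (D ∩ E i) (E j) := by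
  have hmul {A : Type u} (hA : #A ≤ κ) : #(ι × A) ≤ κ := by
    rw [mk_prod, lift_id, lift_id]
    exact (mul_le_mul' hι.le hA).trans (mul_eq_self hκ).le
  obtain ⟨E, hTE, hE⟩ := exists_superset_forall_not_mapsTo hκ (P := ι × X)
    (T := Set.univ ×ˢ T)
    (by rw [mk_setProd, mk_univ]; exact mul_lt_of_lt hκ hι hT)
    (𝓕 := range fun (jh : ι × 𝓕) p => (jh.1, jh.2.1 p.2)) (mk_range_le.trans (hmul h𝓕))
    (𝓓 := range fun iD : ι × 𝓓 => {iD.1} ×ˢ iD.2.1) (mk_range_le.trans (hmul h𝓓))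
  refine ⟨fun i => {x | (i, x) ∈ E}, fun i x hx => hTE ⟨mem_univ i, hx⟩,
    fun i j h hh D hD S hSD hκS hinj hne hmaps => ?_⟩
  refine hE _ ⟨(j, ⟨h, hh⟩), rfl⟩ _ ⟨(i, ⟨D, hD⟩), rfl⟩ (Prod.mk i '' S) ?_ ?_ ?_ ?_ ?_
  · rintro _ ⟨x, hx, rfl⟩
    exact ⟨rfl, hSD hx⟩
  · rwa [mk_image_eq (Prod.mk_right_injective i)]
  · rintro _ ⟨x, hx, rfl⟩ _ ⟨y, hy, rfl⟩ hxy
    rw [hinj hx hy (Prod.ext_iff.1 hxy).2]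
  · rintro _ ⟨x, hx, rfl⟩ heq
    exact hne (Prod.ext_iff.1 heq).1.symm x hx (Prod.ext_iff.1 heq).2
  · rintro ⟨_, x⟩ ⟨⟨rfl, hx⟩, hxE⟩
    exact hmaps ⟨hx, hxE⟩

end Diagonalization

section Bernstein

open Set Filter Topology

theorem mk_setOf_isClosed_le_continuum (X : Type u) [TopologicalSpace X]
    [SecondCountableTopology X] : #{F : Set X | IsClosed F} ≤ 𝔠 := by
  have hborel := (TopologicalSpace.isBasis_countableBasis X).borel_eq_generateFrom
  refine (mk_le_mk_of_subset fun F hF => ?_).trans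
    (MeasurableSpace.cardinal_measurableSet_le_continuum
      ((TopologicalSpace.countable_countableBasis X).le_aleph0.trans aleph0_le_continuum))
  rw [mem_ofPred_eq, ← hborel]
  borelize X
  exact IsClosed.measurableSet hF

theorem mk_le_continuum_of_secondCountable (X : Type u) [TopologicalSpace X] [T1Space X]
    [SecondCountableTopology X] : #X ≤ 𝔠 :=
  (mk_le_of_injective (f := fun x : X => (⟨{x}, isClosed_singleton⟩ : {F : Set X | IsClosed F}))
    fun _ _ h => singleton_injective (congrArg Subtype.val h)).trans
    (mk_setOf_isClosed_le_continuum X)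

theorem mk_range_extendFrom_le {X Y : Type u} [TopologicalSpace X] [TopologicalSpace Y]
    [Nonempty Y] (D : Set X) : #(range (extendFrom D : (X → Y) → X → Y)) ≤ #(D → Y) := by
  let extend (g : D → Y) (x : X) : Y := lim (map g (comap Subtype.val (𝓝 x)))
  have hfactor : (extendFrom D : (X → Y) → X → Y) = extend ∘ D.domRestrict := by
    funext f x
    change lim (map f (𝓝 x ⊓ 𝓟 D)) = lim (map (f ∘ Subtype.val) (comap Subtype.val (𝓝 x)))
    rw [← map_map, Filter.subtype_coe_map_comap]
  rw [hfactor]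
  exact (mk_le_mk_of_subset (range_comp_subset_range _ _)).trans mk_range_le

theorem mk_range_extendFrom_le_continuum {X : Type u} [TopologicalSpace X] [T1Space X]
    [SecondCountableTopology X] [Nonempty X] {D : Set X} (hD : D.Countable) :
    #(range (extendFrom D : (X → X) → X → X)) ≤ 𝔠 :=
  calc #(range (extendFrom D : (X → X) → X → X))
      ≤ #(D → X) := mk_range_extendFrom_le D
    _ = #X ^ #D := mk_arrow D X ▸ by simp only [lift_id]
    _ ≤ 𝔠 ^ #D := power_le_power_right (mk_le_continuum_of_secondCountable X)
    _ ≤ 𝔠 ^ ℵ₀ := power_le_power_left continuum_ne_zero hD.le_aleph0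
    _ = 𝔠 := continuum_power_aleph0

theorem eqOn_extendFrom {X Y : Type*} [TopologicalSpace X] [TopologicalSpace Y] [T2Space Y]
    {D A O : Set X} {h : X → Y} (hD : Dense D) (hDA : D ⊆ A) (hO : IsOpen O)
    (hcont : ContinuousOn h (O ∩ A)) : EqOn (extendFrom D h) h (O ∩ A) := by
  intro x hx
  refine extendFrom_eq (hD x) ((hcont x hx).mono_left ?_)
  rw [← nhdsWithin_inter_of_mem' (mem_nhdsWithin_of_mem_nhds (hO.mem_nhds hx.1)), inter_comm]
  exact nhdsWithin_mono x (inter_subset_inter_right O hDA)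

theorem not_countable_closedBall {X : Type*} [NormedAddCommGroup X] [NormedSpace ℝ X] [Nontrivial X]
    (x : X) {r : ℝ} (hr : 0 < r) : ¬(Metric.closedBall x r).Countable := by
  intro hcount
  exact ((continuum_le_cardinal_of_isOpen ℝ Metric.isOpen_ball ⟨x, Metric.mem_ball_self hr⟩).trans
    (hcount.mono Metric.ball_subset_closedBall).le_aleph0).not_gt aleph0_lt_continuum

theorem extendFrom_eq_self {X Y : Type*} [TopologicalSpace X] [TopologicalSpace Y] [T2Space Y]
    {D : Set X} {f : X → Y} (hD : Dense D) (hf : Continuous f) : extendFrom D f = f :=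
  funext fun x => extendFrom_eq (hD x) hf.continuousWithinAt

/-- A set meeting every uncountable closed set, i.e. one half of the definition of a Bernstein
set. -/
def MeetsUncountableClosed {X : Type*} [TopologicalSpace X] (Y : Set X) : Prop :=
  ∀ F : Set X, IsClosed F → ¬F.Countable → (Y ∩ F).Nonempty

namespace MeetsUncountableClosed

theorem univ {X : Type*} [TopologicalSpace X] : MeetsUncountableClosed (Set.univ : Set X) := by
  intro F _ hF
  rw [univ_inter]
  exact nonempty_iff_ne_empty.2 fun h => hF (h ▸ countable_empty)

/-- A copy of the Cantor set inside `F` splits into continuum many disjoint copies, and `Y` meets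
each of them. -/
theorem continuum_le_mk_inter {X : Type u} [TopologicalSpace X] [PolishSpace X] {Y F : Set X}
    (hY : MeetsUncountableClosed Y) (hF : IsClosed F) (hF' : ¬F.Countable) :
    𝔠 ≤ #(Y ∩ F : Set X) := by
  obtain ⟨f, hfF, hf, hf_inj⟩ := hF.exists_nat_bool_injection_of_not_countable hF'
  let e : (ℕ → Bool) × (ℕ → Bool) ≃ₜ (ℕ → Bool) := Homeomorph.sumArrowHomeomorphProdArrow.symm.trans
    (Homeomorph.piCongrLeft (Y := fun _ => Bool) Equiv.natSumNatEquivNat)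
  have hmeet (s : ℕ → Bool) : ∃ t, f (e (s, t)) ∈ Y := by
    have hcont : Continuous fun t => f (e (s, t)) := by fun_prop
    have hinj : Function.Injective fun t => f (e (s, t)) :=
      hf_inj.comp (e.injective.comp (Prod.mk_right_injective s))
    have huncountable : ¬(range fun t => f (e (s, t))).Countable := fun hcount =>
      have := hcount.to_subtype
      (aleph0_lt_mk_iff.1 (by simp [aleph0_lt_continuum])).not_countable
        (Equiv.ofInjective _ hinj).injective.countable
    obtain ⟨_, hy, t, rfl⟩ := hY _ (isCompact_range hcont).isClosed huncountable
    exact ⟨t, hy⟩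
  choose t ht using hmeet
  have hinj : Function.Injective fun s =>
      (⟨f (e (s, t s)), ht s, hfF ⟨_, rfl⟩⟩ : (Y ∩ F : Set X)) :=
    fun s s' h => (Prod.ext_iff.1 (e.injective (hf_inj (congrArg Subtype.val h)))).1
  calc 𝔠 = lift.{u} #(ℕ → Bool) := by simp
    _ ≤ lift.{0} #(Y ∩ F : Set X) := lift_mk_le_lift_mk_of_injective hinj
    _ = #(Y ∩ F : Set X) := lift_id'.{0} _

theorem diff_countable {X : Type*} [TopologicalSpace X] [PolishSpace X] {Y T : Set X}
    (hY : MeetsUncountableClosed Y) (hT : T.Countable) : MeetsUncountableClosed (Y \ T) := by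
  intro F hF hF'
  by_contra hempty
  have hsub : Y ∩ F ⊆ T := fun x hx => by_contra fun hxT => hempty ⟨x, ⟨hx.1, hxT⟩, hx.2⟩
  exact ((hY.continuum_le_mk_inter hF hF').trans (hT.mono hsub).le_aleph0).not_gt
    aleph0_lt_continuum

section NormedSpace

variable {X : Type*} [NormedAddCommGroup X] [NormedSpace ℝ X]

theorem dense [Nontrivial X] {Y : Set X} (hY : MeetsUncountableClosed Y) : Dense Y := by
  refine fun x => (mem_closure_iff_nhds_basis Metric.nhds_basis_closedBall).2 fun r hr => ?_
  exact hY _ Metric.isClosed_closedBall (not_countable_closedBall x hr)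

theorem isPreconnected (hX : 1 < Module.rank ℝ X) {Y : Set X} (hY : MeetsUncountableClosed Y) :
    IsPreconnected Y := by
  have : Nontrivial X := rank_pos_iff_nontrivial.1 (zero_lt_one.trans hX)
  intro u v hu hv hYuv hYu hYv
  by_contra hempty
  have hdisj : ¬(u ∩ v).Nonempty := fun h =>
    hempty (inter_comm .. ▸ hY.dense.inter_open_nonempty _ (hu.inter hv) h)
  have hcount : ((u ∪ v)ᶜ).Countable := by
    by_contra hF
    obtain ⟨y, hyY, hy⟩ := hY _ (hu.union hv).isClosed_compl hF
    exact hy (hYuv hyY)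
  have hconn := (hcount.isConnected_compl_of_one_lt_rank hX).isPreconnected
  rw [compl_compl] at hconn
  obtain ⟨x, hx⟩ := hYu
  obtain ⟨y, hy⟩ := hYv
  exact hdisj ((hconn u v hu hv subset_rfl ⟨x, hYuv hx.1, hx.2⟩ ⟨y, hYuv hy.1, hy.2⟩).mono
    inter_subset_right)

end NormedSpace

end MeetsUncountableClosed

/-- `f` restricts to an injective continuous map from `s` to `t`. -/
structure InjContOn {X Y : Type*} [TopologicalSpace X] [TopologicalSpace Y] (f : X → Y) (s : Set X)
    (t : Set Y) : Prop where
  continuousOn : ContinuousOn f s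
  injOn : InjOn f s
  mapsTo : MapsTo f s t

theorem InjContOn.comp {X Y Z : Type*} [TopologicalSpace X] [TopologicalSpace Y]
    [TopologicalSpace Z] {g : Y → Z} {f : X → Y} {s : Set X} {t : Set Y} {u : Set Z}
    (hg : InjContOn g t u) (hf : InjContOn f s t) : InjContOn (g ∘ f) s u where
  continuousOn := hg.continuousOn.comp hf.continuousOn hf.mapsTo
  injOn := hg.injOn.comp hf.injOn hf.mapsTo
  mapsTo := hg.mapsTo.comp hf.mapsTo

theorem exists_injContOn {X Y : Type*} [TopologicalSpace X] [TopologicalSpace Y] [Nonempty Y]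
    {s : Set X} {t : Set Y} {f : s → t} (hf : Continuous f) (hf_inj : Function.Injective f) :
    ∃ g, InjContOn g s t := by
  let g : X → Y := Function.extend Subtype.val (Subtype.val ∘ f) fun _ => Classical.arbitrary Y
  have hg (x : s) : g x = f x := Subtype.val_injective.extend_apply _ _ x
  refine ⟨g, ?_, fun x hx y hy h => ?_, fun x hx => hg ⟨x, hx⟩ ▸ (f _).2⟩
  · exact continuousOn_iff_continuous_domRestrict.2
      ((continuous_subtype_val.comp hf).congr fun x => (hg x).symm)
  · rw [hg ⟨x, hx⟩, hg ⟨y, hy⟩] at h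
    exact congr($(hf_inj (Subtype.ext h)).1)

/-- A family of subsets of `X` admitting no injective continuous maps, even locally, between
relatively open pieces of its members, except for identity maps. -/
def IsRigidFamily {ι X : Type*} [TopologicalSpace X] (E : ι → Set X) : Prop :=
  ∀ c d, ∀ O : Set X, IsOpen O → ∀ h : X → X, InjContOn h (O ∩ E c) (E d) →
    ∀ x ∈ O ∩ E c, c = d ∧ h x = x

theorem exists_isRigidFamily (ι : Type u) [Countable ι] {X : Type u} [NormedAddCommGroup X]
    [NormedSpace ℝ X] [Nontrivial X] [CompleteSpace X] [TopologicalSpace.SeparableSpace X]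
    {T : Set X} (hT : T.Countable) :
    ∃ E : ι → Set X, IsRigidFamily E ∧ ∀ c, T ⊆ E c ∧ MeetsUncountableClosed (E c) := by
  have := UniformSpace.secondCountable_of_separable X
  obtain ⟨D, hD, hD_dense⟩ := TopologicalSpace.exists_countable_dense X
  obtain ⟨E, hTE, hE⟩ := exists_family_forall_not_mapsTo aleph0_le_continuum (ι := ι)
    (mk_le_aleph0.trans_lt aleph0_lt_continuum)
    ((hT.union hD).le_aleph0.trans_lt aleph0_lt_continuum)
    (mk_range_extendFrom_le_continuum hD) (mk_setOf_isClosed_le_continuum X)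
  have hmeets (c : ι) : MeetsUncountableClosed (E c) := by
    intro F hF hF'
    obtain ⟨v, hv⟩ := exists_ne (0 : X)
    by_contra hempty
    have hcard : 𝔠 ≤ #F := by
      simpa only [univ_inter] using MeetsUncountableClosed.univ.continuum_le_mk_inter hF hF'
    refine hE c c _ ⟨(· + v), extendFrom_eq_self hD_dense (by fun_prop)⟩ F hF F subset_rfl hcard
      (add_left_injective v).injOn (fun _ x _ => by simpa using hv)
      fun x hx => (hempty ⟨x, hx.2, hx.1⟩).elim
  refine ⟨E, fun c d O hO h hh x hx => ?_,
    fun c => ⟨subset_union_left.trans (hTE c), hmeets c⟩⟩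
  by_contra! hne
  have hnear : ∀ᶠ y in 𝓝 x, y ∈ O ∧ (c = d → y ∈ E c → h y ≠ y) := by
    by_cases hcd : c = d
    · have hmoved : ∀ᶠ y in 𝓝[O ∩ E c] x, h y - y ≠ 0 :=
        ((hh.continuousOn x hx).sub continuousWithinAt_id).tendsto.eventually_ne
          (sub_ne_zero.2 (hne hcd))
      filter_upwards [hO.mem_nhds hx.1, eventually_nhdsWithin_iff.1 hmoved]
        with y hyO hy using ⟨hyO, fun _ hyE => sub_ne_zero.1 (hy ⟨hyO, hyE⟩)⟩
    · filter_upwards [hO.mem_nhds hx.1] with y hyO using ⟨hyO, fun h => (hcd h).elim⟩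
  obtain ⟨r, hr, hball⟩ := Metric.nhds_basis_closedBall.mem_iff.1 hnear
  have heq : EqOn (extendFrom D h) h (O ∩ E c) :=
    eqOn_extendFrom hD_dense (subset_union_right.trans (hTE c)) hO hh.continuousOn
  have hsub : E c ∩ Metric.closedBall x r ⊆ O ∩ E c := fun y hy => ⟨(hball hy.2).1, hy.1⟩
  refine hE c d _ ⟨h, rfl⟩ _ Metric.isClosed_closedBall (E c ∩ Metric.closedBall x r)
    inter_subset_right
    ((hmeets c).continuum_le_mk_inter Metric.isClosed_closedBall (not_countable_closedBall x hr))
    ((hh.injOn.mono hsub).congr (heq.mono hsub).symm) (fun hcd y hy => ?_) ?_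
  · rw [heq (hsub hy)]
    exact (hball hy.2).2 hcd hy.1
  · rw [inter_comm]
    exact (hh.mapsTo.mono_left hsub).congr (heq.mono hsub).symm

end Bernstein

section ArrowFamily

open Set Filter Topology

/-- A rigid family of dense sets `E c` of which every edge of a digraph can be a copy: each of them
contains the two endpoints `a` and `b`, and it is connected even without them. -/
structure IsArrowFamily {ι X : Type*} [TopologicalSpace X] (a b : X) (E : ι → Set X) : Prop where
  source_mem : ∀ c, a ∈ E c
  target_mem : ∀ c, b ∈ E c
  dense : ∀ c, Dense (E c)
  isPreconnected_diff : ∀ c, IsPreconnected (E c \ {a, b})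
  rigid : IsRigidFamily E

theorem IsArrowFamily.isPreconnected {ι X : Type*} [TopologicalSpace X] [T1Space X]
    [∀ x : X, (𝓝[≠] x).NeBot] {a b : X} {E : ι → Set X} (hE : IsArrowFamily a b E) (c : ι) :
    IsPreconnected (E c) := by
  have hdense : Dense (E c \ {a, b}) := (hE.dense c).sdiff_finite (toFinite _)
  exact (hE.isPreconnected_diff c).subset_closure sdiff_subset
    (hdense.closure_eq ▸ subset_univ _)

theorem exists_isArrowFamily (ι : Type u) [Countable ι] {X : Type u} [NormedAddCommGroup X]
    [NormedSpace ℝ X] [CompleteSpace X] [TopologicalSpace.SeparableSpace X]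
    (hX : 1 < Module.rank ℝ X) (a b : X) : ∃ E : ι → Set X, IsArrowFamily a b E := by
  have : Nontrivial X := rank_pos_iff_nontrivial.1 (zero_lt_one.trans hX)
  have := UniformSpace.secondCountable_of_separable X
  have hab : ({a, b} : Set X).Countable := (toFinite _).countable
  obtain ⟨E, hrigid, hE⟩ := exists_isRigidFamily ι hab
  exact ⟨E, fun c => (hE c).1 (mem_insert a _), fun c => (hE c).1 (mem_insert_of_mem a rfl),
    fun c => (hE c).2.dense, fun c => ((hE c).2.diff_countable hab).isPreconnected hX, hrigid⟩

end ArrowFamily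

section Ladder

open Set

theorem exists_isLUB_of_wellFoundedLT {V : Type*} [LinearOrder V] [WellFoundedLT V] {s : Set V}
    (hs : BddAbove s) : ∃ d, IsLUB s d := by
  obtain ⟨d, hd⟩ := exists_minimal_of_wellFoundedLT _ hs
  exact ⟨d, hd.prop, fun e he => not_lt.1 (hd.not_prop_of_lt · he)⟩

/-- A ladder system on `V`: each `d` comes with a sequence whose supremum is `d`, which is strictly
increasing whenever `d` is the supremum of a strictly increasing sequence at all, i.e. whenever `d`
has countable cofinality. -/
structure IsLadderSystem {V : Type*} [Preorder V] (l : V → ℕ → V) : Prop where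
  isLUB : ∀ d, IsLUB (range (l d)) d
  strictMono : ∀ d, ∀ s : ℕ → V, StrictMono s → IsLUB (range s) d → StrictMono (l d)

theorem exists_isLadderSystem (V : Type*) [Preorder V] : ∃ l : V → ℕ → V, IsLadderSystem l := by
  have hladder (d : V) : ∃ r : ℕ → V, IsLUB (range r) d ∧
      ∀ s : ℕ → V, StrictMono s → IsLUB (range s) d → StrictMono r := by
    by_cases h : ∃ s : ℕ → V, StrictMono s ∧ IsLUB (range s) d
    · obtain ⟨s, hs, hd⟩ := h
      exact ⟨s, hd, fun _ _ _ => hs⟩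
    · refine ⟨fun _ => d, by rw [range_const]; exact isLUB_singleton, fun s hs hd => ?_⟩
      exact (h ⟨s, hs, hd⟩).elim
  choose l hl_isLUB hl_strictMono using hladder
  exact ⟨l, hl_isLUB, hl_strictMono⟩

namespace IsLadderSystem

variable {V : Type*} [LinearOrder V] {l : V → ℕ → V}

theorem lt (hl : IsLadderSystem l) {d : V} (hd : StrictMono (l d)) (n : ℕ) : l d n < d :=
  (hd n.lt_succ_self).trans_le ((hl.isLUB d).1 ⟨n + 1, rfl⟩)

/-- If `m < g m`, then `g` fixes the supremum `d` of the orbit of `m`, hence every rung `l d n`; but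
the orbit starts below some rung and therefore never gets past it. -/
theorem apply_eq_self [WellFoundedLT V] [OrderTop V] (hl : IsLadderSystem l) {g : V → V}
    (hg : StrictMono g) (hgl : ∀ d, StrictMono (l d) → ∀ n, l (g d) n = g (l d n)) (m : V) :
    g m = m := by
  by_contra hne
  have horbit : StrictMono fun n => g^[n] m :=
    hg.strictMono_iterate_of_lt_map (hg.le_apply.lt_of_ne' hne)
  obtain ⟨d, hd⟩ := exists_isLUB_of_wellFoundedLT (OrderTop.bddAbove (range fun n => g^[n] m))
  have hld : StrictMono (l d) := hl.strictMono d _ horbit hd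
  have hgd : g d = d := by
    refine le_antisymm ((hl.isLUB _).2 ?_) hg.le_apply
    rintro _ ⟨n, rfl⟩
    obtain ⟨_, ⟨k, rfl⟩, hk⟩ := (lt_isLUB_iff hd).1 (hl.lt hld n)
    rw [hgl d hld]
    exact (hg hk).le.trans (Function.iterate_succ_apply' g k m ▸ hd.1 ⟨k + 1, rfl⟩)
  have hrung (n : ℕ) : g (l d n) = l d n := by rw [← hgl d hld, hgd]
  obtain ⟨_, ⟨n, rfl⟩, hn⟩ := (lt_isLUB_iff (hl.isLUB d)).1 ((horbit zero_lt_one).trans_le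
    (hd.1 ⟨1, rfl⟩))
  refine (hl.lt hld n).not_ge (hd.2 ?_)
  rintro _ ⟨k, rfl⟩
  exact (hg.monotone.iterate k hn.le).trans_eq (Function.iterate_fixed (hrung n) k)

end IsLadderSystem

/-- A directed multigraph with vertex type `V`, edge type `J` and a colour in `C` on each edge. -/
structure ColouredDigraph (V J C : Type*) where
  src : J → V
  tgt : J → V
  colour : J → C

/-- A map of edges preserving colours, common sources and common targets. -/
structure ColouredDigraph.IsMorphism {V J V' J' C : Type*} (G : ColouredDigraph V J C)
    (G' : ColouredDigraph V' J' C) (f : J → J') : Prop where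
  colour_eq : ∀ j, G'.colour (f j) = G.colour j
  src_eq : ∀ j k, G.src j = G.src k → G'.src (f j) = G'.src (f k)
  tgt_eq : ∀ j k, G.tgt j = G.tgt k → G'.tgt (f j) = G'.tgt (f k)

/-- Any two edges are joined by a chain of edges in which consecutive ones have a common source or a
common target. -/
def ColouredDigraph.IsEdgeConnected {V J C : Type*} (G : ColouredDigraph V J C) : Prop :=
  ∀ j k, Relation.ReflTransGen (fun j k => G.src j = G.src k ∨ G.tgt j = G.tgt k) j k

section LadderDigraph

variable {V : Type*} [LinearOrder V]

/-- The digraph of the order `≤` on `V`, coloured so as to remember the ladder system `l` and a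
vertex `m`: an edge from a rung `l j n` to `j` has colour `n`, and the loop at `m` has a colour of
its own. -/
noncomputable def ladderDigraph (l : V → ℕ → V) (m : V) :
    ColouredDigraph V {p : V × V // p.1 ≤ p.2} (Bool ⊕ Option ℕ) where
  src p := p.1.1
  tgt p := p.1.2
  colour p := if p.1.1 = p.1.2 then .inl (decide (p.1.1 = m))
    else .inr (Function.partialInv (l p.1.2) p.1.1)

variable {l : V → ℕ → V} {m : V} {p : {p : V × V // p.1 ≤ p.2}}

theorem ladderDigraph_src_surjective : Function.Surjective (ladderDigraph l m).src :=
  fun v => ⟨⟨(v, v), le_rfl⟩, rfl⟩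

theorem isEdgeConnected_ladderDigraph [OrderTop V] : (ladderDigraph l m).IsEdgeConnected :=
  fun p q => .head (b := ⟨(p.1.1, ⊤), le_top⟩) (.inl rfl)
    (.head (b := ⟨(q.1.1, ⊤), le_top⟩) (.inr rfl) (.single (.inl rfl)))

theorem ladderDigraph_colour_eq_inl_iff {c : Bool} :
    (ladderDigraph l m).colour p = .inl c ↔ p.1.1 = p.1.2 ∧ decide (p.1.1 = m) = c := by
  simp only [ladderDigraph]
  split_ifs <;> simp [*]

theorem apply_eq_of_ladderDigraph_colour_eq_inr_some {n : ℕ}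
    (h : (ladderDigraph l m).colour p = .inr (some n)) : l p.1.2 n = p.1.1 := by
  simp only [ladderDigraph, Function.partialInv] at h
  split_ifs at h with _ hex
  · rw [← Option.some_inj.1 (Sum.inr_injective h)]
    exact hex.choose_spec
  · simp at h

theorem IsLadderSystem.ladderDigraph_colour (hl : IsLadderSystem l) {d : V}
    (hd : StrictMono (l d)) (n : ℕ) :
    (ladderDigraph l m).colour ⟨(l d n, d), (hl.lt hd n).le⟩ = .inr (some n) := by
  simp only [ladderDigraph, if_neg (hl.lt hd n).ne, Function.partialInv_left hd.injective]

/-- On vertices, a morphism is a strictly increasing map preserving the ladders, hence the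
identity; so it preserves the distinguished loop only if `m = m'`. -/
theorem IsLadderSystem.eq_of_isMorphism [WellFoundedLT V] [OrderTop V] (hl : IsLadderSystem l)
    {m' : V} {f : {p : V × V // p.1 ≤ p.2} → {p : V × V // p.1 ≤ p.2}}
    (hf : (ladderDigraph l m).IsMorphism (ladderDigraph l m') f) : m = m' := by
  let loop (v : V) : {p : V × V // p.1 ≤ p.2} := ⟨(v, v), le_rfl⟩
  let g (v : V) : V := (f (loop v)).1.1
  have hloop (v : V) : (f (loop v)).1.1 = (f (loop v)).1.2 ∧
      decide (g v = m') = decide (v = m) :=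
    ladderDigraph_colour_eq_inl_iff.1
      ((hf.colour_eq _).trans (ladderDigraph_colour_eq_inl_iff.2 ⟨rfl, rfl⟩))
  have hsrc (p) : (f p).1.1 = g p.1.1 := hf.src_eq p (loop p.1.1) rfl
  have htgt (p) : (f p).1.2 = g p.1.2 := (hf.tgt_eq p (loop p.1.2) rfl).trans (hloop _).1.symm
  have hg : StrictMono g := fun i j hij => by
    let p : {p : V × V // p.1 ≤ p.2} := ⟨(i, j), hij.le⟩
    refine (hsrc p ▸ htgt p ▸ (f p).2 : g i ≤ g j).lt_of_ne fun hgij => hij.ne ?_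
    exact (ladderDigraph_colour_eq_inl_iff.1 ((hf.colour_eq p).symm.trans
      (ladderDigraph_colour_eq_inl_iff.2 ⟨(hsrc p).trans (hgij.trans (htgt p).symm), rfl⟩))).1
  have hgl (d : V) (hd : StrictMono (l d)) (n : ℕ) : l (g d) n = g (l d n) := by
    have hcolour := (hf.colour_eq _).trans (hl.ladderDigraph_colour hd n)
    simpa only [hsrc, htgt] using apply_eq_of_ladderDigraph_colour_eq_inr_some hcolour
  rw [← hl.apply_eq_self hg hgl m]
  simpa using (hloop m).2

end LadderDigraph

end Ladder

section Realization

open Set Filter Topology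
open scoped lp ENNReal

theorem exists_subset_of_isPreconnected_of_subset_iUnion {Y ι : Type*} [TopologicalSpace Y]
    {s : Set Y} (hs : IsPreconnected s) (hne : s.Nonempty) {U : ι → Set Y} (hU : ∀ i, IsOpen (U i))
    (hsub : s ⊆ ⋃ i, U i) (hdisj : ∀ i j, (s ∩ (U i ∩ U j)).Nonempty → i = j) :
    ∃ i, s ⊆ U i := by
  obtain ⟨x, hx⟩ := hne
  obtain ⟨i, hi⟩ := mem_iUnion.1 (hsub hx)
  refine ⟨i, fun y hy => ?_⟩
  obtain ⟨j, hj⟩ := mem_iUnion.1 (hsub hy)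
  by_contra hyi
  have hcover : s ⊆ U i ∪ ⋃ (k) (_ : k ≠ i), U k := fun z hz => by
    obtain ⟨k, hk⟩ := mem_iUnion.1 (hsub hz)
    by_cases hki : k = i
    · exact .inl (hki ▸ hk)
    · exact .inr (mem_biUnion hki hk)
  obtain ⟨z, hz, hzi, hzu⟩ := hs _ _ (hU i) (isOpen_biUnion fun k _ => hU k) hcover ⟨x, hx, hi⟩
    ⟨y, hy, mem_biUnion (fun h => hyi (h ▸ hj)) hj⟩
  obtain ⟨k, hki, hk⟩ := mem_iUnion₂.1 hzu
  exact hki (hdisj k i ⟨z, hz, hk, hzi⟩)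

theorem eq_of_dist_lpSingle_lt {ι : Type*} [DecidableEq ι] {E : ι → Type*}
    [∀ i, NormedAddCommGroup (E i)] {p : ℝ≥0∞} [Fact (1 ≤ p)] {i j : ι} {s : E i} {t : E j}
    (h : dist (lp.single p i s) (lp.single p j t) < ‖s‖) : i = j := by
  by_contra hij
  refine h.not_ge ?_
  rw [dist_eq_norm]
  refine le_of_eq_of_le ?_
    (lp.norm_apply_le_norm (zero_lt_one.trans_le Fact.out).ne'
      (lp.single p i s - lp.single p j t) i)
  rw [lp.coeFn_sub, Pi.sub_apply, lp.single_apply_self, lp.single_apply_ne _ _ _ hij, sub_zero]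

theorem continuous_lp_apply {ι : Type*} (i : ι) : Continuous fun z : ℓ²(ι, ℝ) => z i :=
  (lp.evalCLM ℝ (fun _ : ι => ℝ) 2 i).continuous

namespace ColouredDigraph

/-- The metric space containing the geometric realizations of all digraphs with vertex type `V` and
edge type `J` whose edges are copies of subsets of `X`. -/
abbrev Ambient (V J X : Type*) : Type _ :=
  X × ℓ²(J, ℝ) × ℓ²(V, ℝ) × ℓ²(V, ℝ)

variable {V J C X : Type*} [MetricSpace X] (G : ColouredDigraph V J C) (a b : X) (E : C → Set X)

open Classical in
/-- The point of the edge `j` with parameter `x`. An edge is a copy of a subset of `X`; its ends are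
the points with parameters `a` and `b`. The three coordinates in `ℓ²` name the edge, its source and
its target; they are weighted so that only the name of the source survives at `a` and only the
name of the target survives at `b`. -/
noncomputable def point (j : J) (x : X) : Ambient V J X :=
  (x, lp.single 2 j (dist x a * dist x b), lp.single 2 (G.src j) (dist x b),
    lp.single 2 (G.tgt j) (dist x a))

/-- The geometric realization of `G` in which every edge of colour `c` is a copy of `E c`. -/
def realization : Set (Ambient V J X) :=
  ⋃ j, G.point a b j '' E (G.colour j)

variable {G a b E}

theorem continuous_point (j : J) : Continuous (G.point a b j) := by
  classical
  have hx (x₀ : X) : Continuous fun x : X => dist x x₀ := by fun_prop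
  exact continuous_id.prodMk (((lp.isometry_single _).continuous.comp ((hx a).mul (hx b))).prodMk
    (((lp.isometry_single _).continuous.comp (hx b)).prodMk
      ((lp.isometry_single _).continuous.comp (hx a))))

theorem point_mem_realization {j : J} {x : X} (hx : x ∈ E (G.colour j)) :
    G.point a b j x ∈ G.realization a b E :=
  mem_iUnion_of_mem j ⟨x, hx, rfl⟩

theorem point_left_congr {j k : J} (h : G.src j = G.src k) : G.point a b j a = G.point a b k a := by
  simp [point, h]

theorem point_right_congr {j k : J} (h : G.tgt j = G.tgt k) :
    G.point a b j b = G.point a b k b := by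
  simp [point, h]

theorem src_eq_of_dist_point_lt {j k : J} {x : X}
    (h : dist (G.point a b j x) (G.point a b k x) < dist x b) : G.src j = G.src k := by
  classical
  refine eq_of_dist_lpSingle_lt (E := fun _ => ℝ) (p := 2) (s := dist x b) (t := dist x b) ?_
  rw [Real.norm_of_nonneg dist_nonneg]
  exact ((le_max_left _ _).trans ((le_max_right _ _).trans (le_max_right _ _))).trans_lt h

theorem tgt_eq_of_dist_point_lt {j k : J} {x : X}
    (h : dist (G.point a b j x) (G.point a b k x) < dist x a) : G.tgt j = G.tgt k := by
  classical
  refine eq_of_dist_lpSingle_lt (E := fun _ => ℝ) (p := 2) (s := dist x a) (t := dist x a) ?_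
  rw [Real.norm_of_nonneg dist_nonneg]
  exact ((le_max_right _ _).trans ((le_max_right _ _).trans (le_max_right _ _))).trans_lt h

theorem edge_apply_point_ne_zero_iff {j k : J} {x : X} :
    (G.point a b j x).2.1 k ≠ 0 ↔ j = k ∧ x ≠ a ∧ x ≠ b := by
  classical
  by_cases hjk : j = k
  · subst hjk
    simp [point]
  · simp [point, hjk]

theorem eq_point_of_edge_apply_ne_zero {z : Ambient V J X}
    (hz : z ∈ G.realization a b E) {k : J} (hk : z.2.1 k ≠ 0) :
    z.1 ∈ E (G.colour k) ∧ z = G.point a b k z.1 := by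
  obtain ⟨j, x, hx, rfl⟩ := mem_iUnion.1 hz
  obtain ⟨rfl, -⟩ := edge_apply_point_ne_zero_iff.1 hk
  exact ⟨hx, rfl⟩

theorem fst_eq_of_edge_eq_zero {z : Ambient V J X}
    (hz : z ∈ G.realization a b E) (h : z.2.1 = 0) : z.1 = a ∨ z.1 = b := by
  obtain ⟨j, x, -, rfl⟩ := mem_iUnion.1 hz
  by_contra! hne
  exact edge_apply_point_ne_zero_iff.2 ⟨rfl, hne⟩ (congr($h j))

theorem eq_of_dist_lt_of_edge_eq_zero {z w : Ambient V J X}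
    (hz : z ∈ G.realization a b E) (hw : w ∈ G.realization a b E) (hz0 : z.2.1 = 0)
    (hw0 : w.2.1 = 0) (h : dist z w < dist a b) : z = w := by
  have hfst : z.1 = w.1 := by
    have hlt : dist z.1 w.1 < dist a b := (le_max_left _ _).trans_lt h
    obtain hza | hzb := fst_eq_of_edge_eq_zero hz hz0 <;>
      obtain hwa | hwb := fst_eq_of_edge_eq_zero hw hw0
    · rw [hza, hwa]
    · exact (hlt.ne (by rw [hza, hwb])).elim
    · exact (hlt.ne (by rw [hzb, hwa, dist_comm])).elim
    · rw [hzb, hwb]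
  have hab := fst_eq_of_edge_eq_zero hz hz0
  obtain ⟨j, x, -, rfl⟩ := mem_iUnion.1 hz
  obtain ⟨k, y, -, rfl⟩ := mem_iUnion.1 hw
  obtain rfl : x = y := hfst
  obtain rfl | rfl : x = a ∨ x = b := hab
  · exact point_left_congr (src_eq_of_dist_point_lt h)
  · exact point_right_congr (tgt_eq_of_dist_point_lt (dist_comm a x ▸ h))

section Rigidity

variable {c : C} {ψ : X → Ambient V J X}

theorem colour_eq_and_fst_eq_of_edge_apply_ne_zero (hE : IsRigidFamily E)
    (hψ : InjContOn ψ (E c) (G.realization a b E)) {x : X} (hx : x ∈ E c) {k : J}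
    (hk : (ψ x).2.1 k ≠ 0) : c = G.colour k ∧ (ψ x).1 = x := by
  have hcont : ContinuousOn (fun y => (ψ y).2.1 k) (E c) :=
    (continuous_lp_apply k).comp_continuousOn (continuous_snd.fst.comp_continuousOn hψ.continuousOn)
  obtain ⟨O, hO, hOE⟩ := continuousOn_iff'.1 hcont _ (isOpen_compl_singleton (x := 0))
  have hpoint {y : X} (hy : y ∈ O ∩ E c) :
      (ψ y).1 ∈ E (G.colour k) ∧ ψ y = G.point a b k (ψ y).1 :=
    eq_point_of_edge_apply_ne_zero (hψ.mapsTo hy.2) (hOE.superset hy).1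
  have hfst : InjContOn (fun y => (ψ y).1) (O ∩ E c) (E (G.colour k)) :=
    { continuousOn := (continuous_fst.comp_continuousOn hψ.continuousOn).mono inter_subset_right
      injOn := fun y hy y' hy' (h : (ψ y).1 = (ψ y').1) =>
        hψ.injOn hy.2 hy'.2 (by rw [(hpoint hy).2, (hpoint hy').2, h])
      mapsTo := fun y hy => (hpoint hy).1 }
  exact hE c (G.colour k) O hO _ hfst x (hOE.subset ⟨hk, hx⟩)

/-- Otherwise `ψ x` is an endpoint. The endpoints are isolated from each other, so near `x` the map
`ψ` takes values in the interiors of edges, where it preserves the parameter; by continuity it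
preserves the parameter `x` as well, which then is `a` or `b`. -/
theorem edge_ne_zero [∀ x : X, (𝓝[≠] x).NeBot] (hab : a ≠ b) (hE : IsArrowFamily a b E)
    (hψ : InjContOn ψ (E c) (G.realization a b E)) {x : X} (hx : x ∈ E c \ {a, b}) :
    (ψ x).2.1 ≠ 0 := by
  intro hx0
  have hdist : ∀ᶠ y in 𝓝[E c \ {x}] x, dist (ψ y) (ψ x) < dist a b :=
    ((hψ.continuousOn x hx.1).mono sdiff_subset).eventually
      (Metric.ball_mem_nhds _ (dist_pos.2 hab))
  have hfst : ∀ᶠ y in 𝓝[E c \ {x}] x, (ψ y).1 = y := by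
    filter_upwards [hdist, self_mem_nhdsWithin] with y hy hyE
    have hy0 : (ψ y).2.1 ≠ 0 := fun hy0 => hyE.2 (hψ.injOn hyE.1 hx.1
      (eq_of_dist_lt_of_edge_eq_zero (hψ.mapsTo hyE.1) (hψ.mapsTo hx.1) hy0 hx0 hy))
    obtain ⟨k, hk⟩ : ∃ k, (ψ y).2.1 k ≠ 0 := by
      contrapose! hy0
      exact lp.ext (funext hy0)
    exact (colour_eq_and_fst_eq_of_edge_apply_ne_zero hE.rigid hψ hyE.1 hk).2
  have : (𝓝[E c \ {x}] x).NeBot :=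
    mem_closure_iff_nhdsWithin_neBot.1 ((hE.dense c).sdiff_singleton x x)
  have hlim : Tendsto (fun y => (ψ y).1) (𝓝[E c \ {x}] x) (𝓝 (ψ x).1) :=
    (continuous_fst.tendsto _).comp ((hψ.continuousOn x hx.1).mono sdiff_subset)
  have hx_eq : (ψ x).1 = x :=
    tendsto_nhds_unique (hlim.congr' hfst) (tendsto_id.mono_left nhdsWithin_le_nhds)
  exact hx.2 (hx_eq ▸ fst_eq_of_edge_eq_zero (hψ.mapsTo hx.1) hx0)

theorem exists_eqOn_point [∀ x : X, (𝓝[≠] x).NeBot] (hab : a ≠ b) (hE : IsArrowFamily a b E)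
    (hψ : InjContOn ψ (E c) (G.realization a b E)) :
    ∃ k, G.colour k = c ∧ EqOn ψ (G.point a b k) (E c) := by
  have hdense : Dense (E c \ {a, b}) := (hE.dense c).sdiff_finite (toFinite _)
  have hne : (E c \ {a, b}).Nonempty :=
    have : Nonempty X := ⟨a⟩
    hdense.nonempty
  obtain ⟨k, hk⟩ : ∃ k, ψ '' (E c \ {a, b}) ⊆ {z | z.2.1 k ≠ 0} := by
    refine exists_subset_of_isPreconnected_of_subset_iUnion
      ((hE.isPreconnected_diff c).image ψ (hψ.continuousOn.mono sdiff_subset)) (hne.image ψ)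
      (fun k => isOpen_ne_fun ((continuous_lp_apply k).comp continuous_snd.fst) continuous_const)
      ?_ ?_
    · rintro _ ⟨x, hx, rfl⟩
      by_contra hx0
      exact edge_ne_zero hab hE hψ hx (lp.ext (funext (by simpa using hx0)))
    · rintro j k ⟨_, ⟨x, hx, rfl⟩, hj, hk⟩
      obtain ⟨-, h⟩ := eq_point_of_edge_apply_ne_zero (hψ.mapsTo hx.1) hj
      rw [mem_ofPred_eq, h] at hk
      exact (edge_apply_point_ne_zero_iff.1 hk).1
  rw [image_subset_iff] at hk
  have hcolour {x : X} (hx : x ∈ E c \ {a, b}) : c = G.colour k ∧ (ψ x).1 = x :=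
    colour_eq_and_fst_eq_of_edge_apply_ne_zero hE.rigid hψ hx.1 (hk hx)
  have heq : EqOn ψ (G.point a b k) (E c \ {a, b}) := fun x hx => by
    rw [(eq_point_of_edge_apply_ne_zero (hψ.mapsTo hx.1) (hk hx)).2, (hcolour hx).2]
  exact ⟨k, (hcolour hne.some_mem).1.symm, heq.of_subset_closure hψ.continuousOn
    (continuous_point k).continuousOn sdiff_subset (hdense.closure_eq ▸ subset_univ _)⟩

end Rigidity

theorem injContOn_point (j : J) :
    InjContOn (G.point a b j) (E (G.colour j)) (G.realization a b E) where
  continuousOn := (continuous_point j).continuousOn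
  injOn := fun _ _ _ _ h => congr($h.1)
  mapsTo := fun _ => point_mem_realization

theorem exists_isMorphism_of_injContOn {V' J' : Type*} {G' : ColouredDigraph V' J' C}
    [∀ x : X, (𝓝[≠] x).NeBot] (hab : a ≠ b) (hE : IsArrowFamily a b E)
    {Φ : Ambient V J X → Ambient V' J' X}
    (hΦ : InjContOn Φ (G.realization a b E) (G'.realization a b E)) :
    ∃ f, G.IsMorphism G' f := by
  choose f hcolour hpoint using fun j => exists_eqOn_point hab hE (hΦ.comp (injContOn_point j))
  refine ⟨f, hcolour, fun j k h => ?_, fun j k h => ?_⟩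
  · have hsource : G'.point a b (f j) a = G'.point a b (f k) a := by
      rw [← hpoint j (hE.source_mem _), ← hpoint k (hE.source_mem _), Function.comp_apply,
        Function.comp_apply, point_left_congr h]
    exact src_eq_of_dist_point_lt (by rw [hsource, dist_self]; exact dist_pos.2 hab)
  · have htarget : G'.point a b (f j) b = G'.point a b (f k) b := by
      rw [← hpoint j (hE.target_mem _), ← hpoint k (hE.target_mem _), Function.comp_apply,
        Function.comp_apply, point_right_congr h]
    exact tgt_eq_of_dist_point_lt (by rw [htarget, dist_self]; exact dist_pos.2 hab.symm)

theorem IsEdgeConnected.isPreconnected_realization [∀ x : X, (𝓝[≠] x).NeBot]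
    (hG : G.IsEdgeConnected) (hE : IsArrowFamily a b E) :
    IsPreconnected (G.realization a b E) := by
  refine IsPreconnected.iUnion_of_reflTransGen
    (fun j => (hE.isPreconnected _).image _ (continuous_point j).continuousOn)
    fun j k => Relation.ReflTransGen.mono ?_ _ _ (hG j k)
  rintro j k (h | h)
  · exact ⟨_, mem_image_of_mem _ (hE.source_mem _), a, hE.source_mem _, (point_left_congr h).symm⟩
  · exact ⟨_, mem_image_of_mem _ (hE.target_mem _), b, hE.target_mem _, (point_right_congr h).symm⟩

theorem nontrivial_realization [Nonempty J] (hab : a ≠ b) (hE : IsArrowFamily a b E) :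
    (G.realization a b E).Nontrivial :=
  let j : J := Classical.arbitrary J
  ⟨_, point_mem_realization (hE.source_mem (G.colour j)), _,
    point_mem_realization (hE.target_mem (G.colour j)), fun h => hab congr($h.1)⟩

theorem noInjCont_realization {V' J' : Type*} {G' : ColouredDigraph V' J' C}
    [∀ x : X, (𝓝[≠] x).NeBot] (hab : a ≠ b) (hE : IsArrowFamily a b E)
    (h : ∀ f, ¬ G.IsMorphism G' f) :
    NoInjCont (G.realization a b E) (G'.realization a b E) := by
  rintro ⟨F, hF, hF_inj⟩
  have : Nonempty (Ambient V' J' X) := ⟨a, 0, 0, 0⟩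
  obtain ⟨Φ, hΦ⟩ := exists_injContOn hF hF_inj
  obtain ⟨f, hf⟩ := exists_isMorphism_of_injContOn hab hE hΦ
  exact h f hf

end ColouredDigraph

section Cardinality

universe v

variable {V J : Type u} {X : Type v} {C : Type*} [MetricSpace X] {G : ColouredDigraph V J C}
  {a b : X} {E : C → Set X}

theorem ColouredDigraph.mk_realization_le :
    #(G.realization a b E) ≤ lift.{v} #J * lift.{u} #X := by
  have hsub : G.realization a b E ⊆ range fun p : J × X => G.point a b p.1 p.2 :=
    iUnion_subset fun j => by rintro _ ⟨x, -, rfl⟩; exact ⟨(j, x), rfl⟩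
  rw [← mk_prod]
  exact (mk_le_mk_of_subset hsub).trans mk_range_le

theorem ColouredDigraph.lift_mk_le_mk_realization (hG : Function.Surjective G.src) (hab : a ≠ b)
    (ha : ∀ c, a ∈ E c) : lift.{v} #V ≤ #(G.realization a b E) := by
  choose j hj using hG
  rw [← lift_id'.{u, max u v} #(G.realization a b E), ← lift_umax.{u, v}]
  refine lift_mk_le_lift_mk_of_injective
    (f := fun v => (⟨_, point_mem_realization (ha (G.colour (j v)))⟩ : G.realization a b E))
    fun v w h => ?_
  have hvw : G.point a b (j v) a = G.point a b (j w) a := congr($h.1)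
  rw [← hj v, ← hj w]
  exact src_eq_of_dist_point_lt (by rw [hvw, dist_self]; exact dist_pos.2 hab)

end Cardinality

end Realization

section Pairs

open Set Topology

variable {A A' B C : Type*} [TopologicalSpace A] [TopologicalSpace A'] [TopologicalSpace B]
  [TopologicalSpace C]

theorem NoInjCont.domain_of_injective {f : A → A'} (h : NoInjCont A B) (hf : Continuous f)
    (hf_inj : f.Injective) : NoInjCont A' B :=
  fun ⟨φ, hφ, hφ_inj⟩ => h ⟨φ ∘ f, hφ.comp hf, hφ_inj.comp hf_inj⟩

theorem NoInjCont.prod_domain {D : Type*} [TopologicalSpace D] [Nonempty D] (h : NoInjCont A B) :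
    NoInjCont (D × A) B :=
  h.domain_of_injective (.prodMk_right (Classical.arbitrary D)) (Prod.mk_right_injective _)

theorem NoInjCont.sum_domain (h : NoInjCont A B) : NoInjCont (A ⊕ C) B :=
  h.domain_of_injective continuous_inl Sum.inl_injective

theorem noInjCont_of_subsingleton [Nontrivial A] [Subsingleton B] : NoInjCont A B :=
  fun ⟨_, _, hf⟩ => not_subsingleton A hf.subsingleton

theorem NoInjCont.prod_codomain [PreconnectedSpace A] {D : Type*} [TopologicalSpace D]
    [DiscreteTopology D] (h : NoInjCont A B) : NoInjCont A (D × B) :=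
  fun ⟨f, hf, hf_inj⟩ => h ⟨fun x => (f x).2, hf.snd, fun _ _ hxy =>
    hf_inj (Prod.ext (PreconnectedSpace.constant inferInstance hf.fst) hxy)⟩

theorem NoInjCont.not_range_subset (h : NoInjCont A B) {f : A → C} (hf : Continuous f)
    (hf_inj : f.Injective) {e : B → C} (he : IsEmbedding e) : ¬ range f ⊆ range e := by
  rw [range_subset_range_iff_exists_comp]
  rintro ⟨g, rfl⟩
  exact h ⟨g, he.continuous_iff.2 hf, hf_inj.of_comp⟩

theorem NoInjCont.sum_codomain [PreconnectedSpace A] (hB : NoInjCont A B) (hC : NoInjCont A C) :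
    NoInjCont A (B ⊕ C) := by
  rintro ⟨f, hf, hf_inj⟩
  obtain hright | hleft := isClopen_iff.1 ((isClopen_range_inl (X := B) (Y := C)).preimage hf)
  · refine hC.not_range_subset hf hf_inj .inr ?_
    rwa [← compl_range_inl, subset_compl_iff_disjoint_left, ← preimage_eq_empty_iff]
  · exact hB.not_range_subset hf hf_inj .inl (preimage_eq_univ_iff.1 hleft)

theorem homeoToClopenSubset_sum_left : HomeoToClopenSubset A (A ⊕ B) :=
  ⟨range Sum.inl, isClopen_range_inl, ⟨IsEmbedding.inl.toHomeomorph⟩⟩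

theorem HomeoToClopenSubset.exists_isOpen_singleton (h : HomeoToClopenSubset A B) {x : A}
    (hx : IsOpen {x}) : ∃ y : B, IsOpen {y} := by
  obtain ⟨t, ht, ⟨e⟩⟩ := h
  refine ⟨e x, ?_⟩
  simpa only [image_image, image_singleton] using
    ht.isOpen.isOpenMap_subtype_val _ (e.isOpenMap _ hx)

theorem not_homeoToClopenSubset_sum_punit_prod [ConnectedSpace B] [T1Space B] [Nontrivial B] :
    ¬ HomeoToClopenSubset (C ⊕ PUnit) (A × B) := by
  intro h
  have hpoint : IsOpen {(Sum.inr PUnit.unit : C ⊕ PUnit)} := by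
    simpa using isOpenMap_inr {PUnit.unit} (isOpen_discrete _)
  obtain ⟨p, hp⟩ := h.exists_isOpen_singleton hpoint
  exact not_isOpen_singleton p.2 (by simpa using isOpenMap_snd _ hp)

theorem homeoToClosedSubset_prod_nat_sum_punit [T2Space A] [Nonempty A] :
    HomeoToClosedSubset ((ℕ × A) ⊕ PUnit) (ℕ × A) := by
  let point (_ : PUnit) : ℕ × A := (0, Classical.arbitrary A)
  have hsucc : IsClosedEmbedding Nat.succ := .of_continuous_injective_isClosedMap
    continuous_of_discreteTopology Nat.succ_injective fun _ _ => isClosed_discrete _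
  have hshift : IsClosedEmbedding (Prod.map Nat.succ (id : A → A)) := hsucc.prodMap .id
  have hpoint : IsClosedEmbedding point :=
    continuous_const.isClosedEmbedding (Function.injective_of_subsingleton _)
  have h := hshift.sumElim hpoint <| hshift.injective.sumElim hpoint.injective
    fun p _ h => p.1.succ_ne_zero congr($h.1)
  exact ⟨range _, h.isClosed_range, ⟨h.isEmbedding.toHomeomorph⟩⟩

theorem metrizableSpace_sum [TopologicalSpace.MetrizableSpace A]
    [TopologicalSpace.MetrizableSpace B] : TopologicalSpace.MetrizableSpace (A ⊕ B) := by
  let := TopologicalSpace.metrizableSpaceMetric A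
  let := TopologicalSpace.metrizableSpaceMetric B
  let : MetricSpace (A ⊕ B) := Metric.metricSpaceSum
  infer_instance

theorem stmt8Pair_prod_nat {W : Type u} [TopologicalSpace W] [TopologicalSpace.MetrizableSpace W]
    [ConnectedSpace W] [Nontrivial W] (hW : ℵ₀ ≤ #W) :
    Stmt8Pair #W (ℕ × W) ((ℕ × W) ⊕ PUnit.{u + 1}) := by
  have hcard : #(ℕ × W) = #W := by simp [hW]
  exact ⟨inferInstance, metrizableSpace_sum, hcard, by simp [add_one_eq hW, hW],
    homeoToClopenSubset_sum_left, homeoToClosedSubset_prod_nat_sum_punit,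
    not_homeoToClopenSubset_sum_punit_prod⟩

end Pairs

section Main

universe v

theorem mk_realization_ladderDigraph {V : Type u} [LinearOrder V] {l : V → ℕ → V} {m : V}
    {X : Type v} [MetricSpace X] {a b : X} {E : Bool ⊕ Option ℕ → Set X} (hV : ℵ₀ ≤ #V)
    (hX : lift.{u} #X ≤ lift.{v} #V) (hab : a ≠ b) (ha : ∀ c, a ∈ E c) :
    #((ladderDigraph l m).realization a b E) = lift.{v} #V := by
  refine le_antisymm ?_
    (ColouredDigraph.lift_mk_le_mk_realization ladderDigraph_src_surjective hab ha)
  have hJ : #{p : V × V // p.1 ≤ p.2} ≤ #V :=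
    (mk_subtype_le _).trans (by rw [mk_prod, lift_id, mul_eq_self hV])
  calc #((ladderDigraph l m).realization a b E)
      ≤ lift.{v} #{p : V × V // p.1 ≤ p.2} * lift.{u} #X := ColouredDigraph.mk_realization_le
    _ ≤ lift.{v} #V * lift.{v} #V := mul_le_mul' (lift_le.2 hJ) hX
    _ = lift.{v} #V := mul_eq_self (aleph0_le_lift.2 hV)

theorem exists_connected_metricSpaces_noInjCont {Q : Type u} (hQ : 𝔠 ≤ #Q) :
    ∃ (W : Q → Type u) (_ : ∀ q, MetricSpace (W q)),
      (∀ q, ConnectedSpace (W q) ∧ Nontrivial (W q) ∧ #(W q) = #Q) ∧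
      Pairwise fun q q' => NoInjCont (W q) (W q') := by
  obtain ⟨_, _, -⟩ := exists_ord_eq_type_lt Q
  have hω : ℵ₀ ≤ #Q := aleph0_le_continuum.trans hQ
  have hV : #(WithTop Q) = #Q := (mk_option (α := Q)).trans (add_one_eq hω)
  obtain ⟨E, hE⟩ := exists_isArrowFamily (Bool ⊕ Option ℕ) (X := ℂ)
    (by simp [Complex.rank_real_complex]) 0 1
  obtain ⟨l, hl⟩ := exists_isLadderSystem (WithTop Q)
  let W (q : Q) := (ladderDigraph l (q : WithTop Q)).realization 0 1 E
  have : Nonempty {p : WithTop Q × WithTop Q // p.1 ≤ p.2} := ⟨⟨(⊤, ⊤), le_rfl⟩⟩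
  have hnontrivial (q : Q) : (W q).Nontrivial :=
    ColouredDigraph.nontrivial_realization zero_ne_one hE
  have hconnected (q : Q) : IsConnected (W q) :=
    ⟨(hnontrivial q).nonempty, isEdgeConnected_ladderDigraph.isPreconnected_realization hE⟩
  have hcard (q : Q) : #(W q) = #Q := by
    rw [← hV, ← lift_uzero #(WithTop Q)]
    exact mk_realization_ladderDigraph (hω.trans_eq hV.symm) (by simpa [hV]) zero_ne_one
      hE.source_mem
  refine ⟨fun q => W q, fun q => inferInstance, fun q => ⟨isConnected_iff_connectedSpace.1
    (hconnected q), (hnontrivial q).coe_sort, hcard q⟩, fun q q' hqq' => ?_⟩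
  exact ColouredDigraph.noInjCont_realization zero_ne_one hE fun f hf =>
    hqq' (WithTop.coe_injective (hl.eq_of_isMorphism hf))

end Main

theorem statement8 (α : Cardinal.{u}) (hα : Cardinal.continuum ≤ α)
    (Q : Type u) (hQ : #Q = α) :
    ∃ (A B : Q → Type u) (tA : ∀ q, TopologicalSpace (A q))
      (tB : ∀ q, TopologicalSpace (B q)),
      (∀ q, @Stmt8Pair α (A q) (B q) (tA q) (tB q)) ∧
      (∀ q q', q ≠ q' →
        @NoInjCont (A q) (tA q) (A q') (tA q') ∧
        @NoInjCont (A q) (tA q) (B q') (tB q') ∧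
        @NoInjCont (B q) (tB q) (A q') (tA q') ∧
        @NoInjCont (B q) (tB q) (B q') (tB q')) := by
  subst hQ
  obtain ⟨W, _, hW, hNo⟩ := exists_connected_metricSpaces_noInjCont hα
  refine ⟨fun q => ℕ × W q, fun q => (ℕ × W q) ⊕ PUnit.{u + 1}, inferInstance, inferInstance,
    fun q => ?_, fun q q' hqq' => ?_⟩
  · obtain ⟨_, _, hcard⟩ := hW q
    rw [← hcard]
    exact stmt8Pair_prod_nat (aleph0_le_continuum.trans (hα.trans_eq hcard.symm))
  · obtain ⟨_, _, -⟩ := hW q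
    have hA : NoInjCont (W q) (ℕ × W q') := (hNo hqq').prod_codomain
    have hB : NoInjCont (W q) ((ℕ × W q') ⊕ PUnit.{u + 1}) :=
      hA.sum_codomain noInjCont_of_subsingleton
    exact ⟨hA.prod_domain, hB.prod_domain, hA.prod_domain.sum_domain, hB.prod_domain.sum_domain⟩
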